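/- There exist an absolute constant γ > 0 and absolute constants c₁, c₂, c₃ > 0 such that the following holds. In the model Y = Xβ* + ξ with p ≥ n and k* ≤ c·n for an absolute constant c, if conditionally on ξ the rows X_i^T of X are i.i.d. N(0,Σ), then with probability at least 1 − c₁e^{−c₂n} the minimum ℓ2-norm interpolator β̂ satisfies ‖Σ^{1/2}(β̂ − β*)‖₂ ≥ min( r̄(γ), c₃‖ξ‖₂/√n ). -/

import Mathlib

open MeasureTheory ProbabilityTheory Matrix Finset
open scoped ENNReal Classical

noncomputable section

/-- Euclidean (`ℓ2`) norm of a finite real vector. -/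
def enorm2 {m : ℕ} (v : Fin m → ℝ) : ℝ := Real.sqrt (∑ i, v i ^ 2)

/-- The prediction (semi-)norm `‖Σ^{1/2} d‖₂ = √(dᵀ Σ d)`. -/
def predNorm {p : ℕ} (Sig : Matrix (Fin p) (Fin p) ℝ) (d : Fin p → ℝ) : ℝ :=
  Real.sqrt (d ⬝ᵥ Sig.mulVec d)

/-- The standard Gaussian measure `N(0, I_p)` on `ℝ^p`. -/
def stdGaussian (p : ℕ) : Measure (Fin p → ℝ) :=
  Measure.pi fun _ : Fin p => gaussianReal 0 1

/-- `Σ^{1/2} = P Λ^{1/2} Pᵀ` built from the eigendecomposition data. -/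
def covHalf (p : ℕ) (lam : ℕ → ℝ) (Porth : Matrix (Fin p) (Fin p) ℝ) :
    Matrix (Fin p) (Fin p) ℝ :=
  Porth * Matrix.diagonal (fun i : Fin p => Real.sqrt (lam ((i : ℕ) + 1))) * Porthᵀ

/-- The Gaussian law `N(0,Σ)` on `ℝ^p`, realized as the pushforward of `N(0,I_p)`
by `g ↦ Σ^{1/2} g`. -/
def mvGaussian (p : ℕ) (lam : ℕ → ℝ) (Porth : Matrix (Fin p) (Fin p) ℝ) :
    Measure (Fin p → ℝ) :=
  Measure.map (fun g => (covHalf p lam Porth).mulVec g) (stdGaussian p)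

/-- `r_k(Σ) = ∑_{i=k}^p λ_i(Σ)` (eigenvalues `1`-indexed). -/
def rsum (p : ℕ) (lam : ℕ → ℝ) (k : ℕ) : ℝ := ∑ i ∈ Finset.Icc k p, lam i

/-- The set `{k ∈ {1,…,p} : r_k(Σ)/λ_k(Σ) ≥ c₀ n}`. -/
def kstarSet (p : ℕ) (lam : ℕ → ℝ) (c0 : ℝ) (n : ℕ) : Set ℕ :=
  {k | 1 ≤ k ∧ k ≤ p ∧ c0 * n ≤ rsum p lam k / lam k}

/-- `k* = inf { k ∈ {1,…,p} : r_k(Σ)/λ_k(Σ) ≥ c₀ n }`. -/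
def kstar (p : ℕ) (lam : ℕ → ℝ) (c0 : ℝ) (n : ℕ) : ℕ := sInf (kstarSet p lam c0 n)

/-- `ρ = ‖β*‖₂ + 4‖ξ‖₂/√(r_{k*}(Σ))`. -/
def rho (p : ℕ) (lam : ℕ → ℝ) (c0 : ℝ) (n : ℕ) (βstar : Fin p → ℝ) (ξnorm : ℝ) : ℝ :=
  enorm2 βstar + 4 * ξnorm / Real.sqrt (rsum p lam (kstar p lam c0 n))

/-- `r*(η) = inf { r > 0 : ∑ᵢ min(λ_i(Σ), r²) ≤ η n r² }`. -/
def rstar (p n : ℕ) (lam : ℕ → ℝ) (η : ℝ) : ℝ :=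
  sInf {r : ℝ | 0 < r ∧ ∑ i : Fin p, min (lam ((i : ℕ) + 1)) (r ^ 2) ≤ η * n * r ^ 2}

/-- `r̄(γ) = sup { r > 0 : ∑ᵢ min(λ_i(Σ)ρ², r²) ≤ γ ‖ξ‖₂² }`. -/
def rbar (p : ℕ) (lam : ℕ → ℝ) (γ ρ ξnorm : ℝ) : ℝ :=
  sSup {r : ℝ | 0 < r ∧ ∑ i : Fin p, min (lam ((i : ℕ) + 1) * ρ ^ 2) (r ^ 2) ≤ γ * ξnorm ^ 2}

/-- `k̄ = inf { k ≥ k* : r_k(Σ) ≤ (γ/2) r_{k*}(Σ) }`, with `k̄ = p+1` if the set is empty. -/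
def kbar (p : ℕ) (lam : ℕ → ℝ) (c0 : ℝ) (n : ℕ) (γ : ℝ) : ℕ :=
  if _h : {k | kstar p lam c0 n ≤ k ∧
      rsum p lam k ≤ γ / 2 * rsum p lam (kstar p lam c0 n)}.Nonempty
  then sInf {k | kstar p lam c0 n ≤ k ∧
      rsum p lam k ≤ γ / 2 * rsum p lam (kstar p lam c0 n)}
  else p + 1

/-- `b` is a minimum `ℓ2`-norm interpolator for the design `M` and responses `Y`. -/
def IsMinInterp {n p : ℕ} (M : Fin n → Fin p → ℝ) (Y : Fin n → ℝ) (b : Fin p → ℝ) : Prop :=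
  (∀ i, ∑ j, M i j * b j = Y i) ∧
    ∀ b' : Fin p → ℝ, (∀ i, ∑ j, M i j * b' j = Y i) → enorm2 b ≤ enorm2 b'

theorem card_le_of_separated_unitBall {E : Type*} [NormedAddCommGroup E] [NormedSpace ℝ E]
    [FiniteDimensional ℝ E] (s : Finset E) {ε : ℝ} (hε : 0 < ε) (hs : ∀ c ∈ s, ‖c‖ ≤ 1)
    (h : ∀ c ∈ s, ∀ d ∈ s, c ≠ d → ε ≤ ‖c - d‖) :
    (s.card : ℝ) ≤ (1 + 2 / ε) ^ Module.finrank ℝ E := by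
  borelize E
  let μ : Measure E := Measure.addHaar
  have hδ : 0 < ε / 2 := by positivity
  have hρ : 0 < 1 + ε / 2 := by positivity
  have hdisj : Set.Pairwise (s : Set E)
      (Function.onFun Disjoint fun c => Metric.ball (c : E) (ε / 2)) := by
    rintro c hc d hd hcd
    apply Metric.ball_disjoint_ball
    rw [dist_eq_norm]
    linarith [h c hc d hd hcd]
  have hsub : (⋃ c ∈ s, Metric.ball (c : E) (ε / 2)) ⊆ Metric.ball (0 : E) (1 + ε / 2) := by
    refine Set.iUnion₂_subset fun x hx => ?_
    apply Metric.ball_subset_ball'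
    rw [dist_zero_right]
    linarith [hs x hx]
  have hvol : (s.card : ℝ≥0∞) * ENNReal.ofReal ((ε / 2) ^ Module.finrank ℝ E) *
        μ (Metric.ball 0 1) ≤
      ENNReal.ofReal ((1 + ε / 2) ^ Module.finrank ℝ E) * μ (Metric.ball 0 1) :=
    calc
      _ = μ (⋃ c ∈ s, Metric.ball (c : E) (ε / 2)) := by
        rw [measure_biUnion_finset hdisj fun c _ => measurableSet_ball]
        simp only [μ.addHaar_ball_of_pos _ hδ, Finset.sum_const, nsmul_eq_mul, mul_assoc]
      _ ≤ μ (Metric.ball (0 : E) (1 + ε / 2)) := measure_mono hsub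
      _ = _ := by simp only [μ.addHaar_ball_of_pos _ hρ]
  have hcard := (ENNReal.mul_le_mul_iff_left (Metric.measure_ball_pos μ _ zero_lt_one).ne'
    measure_ball_lt_top.ne).1 hvol
  have hreal := ENNReal.toReal_le_of_le_ofReal (by positivity) hcard
  rw [ENNReal.toReal_mul, ENNReal.toReal_natCast,
    ENNReal.toReal_ofReal (by positivity)] at hreal
  have hsplit : 1 + 2 / ε = (1 + ε / 2) / (ε / 2) := by field_simp; ring
  rw [hsplit, div_pow, le_div_iff₀ (by positivity)]
  exact hreal

/-- The unit sphere has an `ε`-net of at most `(1 + 2 / ε) ^ dim` points. -/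
theorem exists_sphere_net (E : Type*) [NormedAddCommGroup E] [NormedSpace ℝ E]
    [FiniteDimensional ℝ E] {ε : ℝ} (hε : 0 < ε) :
    ∃ s : Finset E, (∀ u ∈ s, ‖u‖ = 1) ∧ (s.card : ℝ) ≤ (1 + 2 / ε) ^ Module.finrank ℝ E ∧
      ∀ v : E, ‖v‖ = 1 → ∃ u ∈ s, ‖v - u‖ ≤ ε := by
  let good : Finset E → Prop := fun s =>
    (∀ u ∈ s, ‖u‖ = 1) ∧ ∀ c ∈ s, ∀ d ∈ s, c ≠ d → ε ≤ ‖c - d‖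
  have hbound : ∀ s, good s → (s.card : ℝ) ≤ (1 + 2 / ε) ^ Module.finrank ℝ E := fun s hs =>
    card_le_of_separated_unitBall s hε (fun c hc => (hs.1 c hc).le) hs.2
  have hfin : {m : ℕ | ∃ s, good s ∧ s.card = m}.Finite := by
    refine (Set.finite_Iic ⌊(1 + 2 / ε) ^ Module.finrank ℝ E⌋₊).subset ?_
    rintro m ⟨s, hs, rfl⟩
    exact Nat.le_floor (hbound s hs)
  obtain ⟨m, ⟨s, hs, rfl⟩, hmax⟩ := hfin.exists_maximal ⟨0, ∅, by simp [good], rfl⟩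
  refine ⟨s, hs.1, hbound s hs, fun v hv => ?_⟩
  by_contra! hfar
  have hvs : v ∉ s := fun hmem => by
    have := hfar v hmem
    simp at this
    linarith
  have hins : good (insert v s) := by
    refine ⟨?_, ?_⟩
    · intro u hu
      rcases Finset.mem_insert.1 hu with rfl | hu
      exacts [hv, hs.1 u hu]
    · intro c hc d hd hcd
      rcases Finset.mem_insert.1 hc with rfl | hcs <;>
        rcases Finset.mem_insert.1 hd with rfl | hds
      · exact absurd rfl hcd
      · exact (hfar d hds).le
      · rw [norm_sub_rev]; exact (hfar c hcs).le
      · exact hs.2 c hcs d hds hcd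
  have := hmax ⟨_, hins, rfl⟩ (by simp [Finset.card_insert_of_notMem hvs])
  simp [Finset.card_insert_of_notMem hvs] at this

theorem opNorm_le_of_sphere_net {E F : Type*} [NormedAddCommGroup E] [NormedSpace ℝ E]
    [NormedAddCommGroup F] [NormedSpace ℝ F] (T : E →L[ℝ] F) (s : Set E) {ε B : ℝ}
    (hB : 0 ≤ B) (hε : 0 ≤ ε) (hε1 : ε < 1)
    (hs : ∀ v : E, ‖v‖ = 1 → ∃ u ∈ s, ‖v - u‖ ≤ ε) (hT : ∀ u ∈ s, ‖T u‖ ≤ B) :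
    ‖T‖ ≤ B / (1 - ε) := by
  have hle : ‖T‖ ≤ B + ε * ‖T‖ := by
    refine T.opNorm_le_of_unit_norm (by positivity) fun v hv => ?_
    obtain ⟨u, hu, huv⟩ := hs v hv
    calc ‖T v‖ = ‖T u + T (v - u)‖ := by rw [← map_add]; simp
      _ ≤ ‖T u‖ + ‖T (v - u)‖ := norm_add_le _ _
      _ ≤ B + ε * ‖T‖ := by
        refine add_le_add (hT u hu) ((T.le_opNorm _).trans ?_)
        rw [mul_comm]
        gcongr
  rw [le_div_iff₀ (by linarith)]
  linarith

/-- If `X` is independent of the discrete variable `K` and `X` avoids each `A k` with probability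
at least `1 - ε`, then `X ∉ A K` has outer probability at least `1 - ε`. The variable `K` need not
be measurable. -/
theorem one_le_measure_add_of_indep_discrete {Ω α : Type*} [MeasurableSpace Ω] [MeasurableSpace α]
    (P : Measure Ω) [IsProbabilityMeasure P] {X : Ω → α} (hX : Measurable X) (K : Ω → ℕ)
    (hind : ∀ A : Set α, MeasurableSet A → ∀ B : Set ℕ,
      P (X ⁻¹' A ∩ K ⁻¹' B) = P (X ⁻¹' A) * P (K ⁻¹' B))
    (A : ℕ → Set α) (hA : ∀ k, MeasurableSet (A k)) {ε : ℝ≥0∞} (hAε : ∀ k, P (X ⁻¹' A k) ≤ ε)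
    (S : Set Ω) (hS : ∀ᵐ ω ∂P, X ω ∉ A (K ω) → ω ∈ S) : 1 ≤ P S + ε := by
  let H : ℕ → Set Ω := fun j => K ⁻¹' Set.Iio j
  let F : ℕ → Set Ω := fun j => ⋂ i ≥ j, toMeasurable P (H i)
  have hFm : ∀ j, MeasurableSet (F j) := fun j =>
    MeasurableSet.iInter fun i => MeasurableSet.iInter fun _ => measurableSet_toMeasurable _ _
  have hHF : ∀ j, H j ⊆ F j := fun j => Set.subset_iInter₂ fun i hi =>
    (Set.preimage_mono (Set.Iio_subset_Iio hi)).trans (subset_toMeasurable _ _)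
  have hFmono : Monotone F := fun i j hij =>
    Set.subset_iInter₂ fun l hl => Set.iInter₂_subset l (le_trans hij hl)
  have hFG : ∀ j G, MeasurableSet G → P (F j ∩ G) = P (H j ∩ G) := by
    intro j G hG
    refine le_antisymm ?_ (measure_mono (Set.inter_subset_inter_left _ (hHF j)))
    rw [← Measure.measure_toMeasurable_inter hG (measure_ne_top P (H j))]
    exact measure_mono (Set.inter_subset_inter_left _ (Set.iInter₂_subset j le_rfl))
  have hF0 : P (F 0) = 0 := by
    have := hFG 0 Set.univ MeasurableSet.univ
    simpa [H] using this
  let D : ℕ → Set Ω := fun j => F (j + 1) \ F j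
  have hDm : ∀ j, MeasurableSet (D j) := fun j => (hFm _).diff (hFm _)
  have hDdisj : Pairwise (Function.onFun Disjoint D) := by
    refine (pairwise_disjoint_on D).2 fun i j hij => ?_
    exact Set.disjoint_left.2 fun ω hi hj => hj.2 (hFmono hij hi.1)
  have hDX : ∀ j, P (D j ∩ X ⁻¹' A j) = P (X ⁻¹' A j) * P (D j) := by
    intro j
    have hXm := hX (hA j)
    have hFX : ∀ i, P (F i ∩ X ⁻¹' A j) = P (X ⁻¹' A j) * P (F i) := by
      intro i
      have h1 := hFG i Set.univ MeasurableSet.univ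
      simp only [Set.inter_univ] at h1
      rw [hFG i _ hXm, Set.inter_comm, hind _ (hA j), h1]
    have h1 : P (D j) = P (F (j + 1)) - P (F j) :=
      measure_sdiff (hFmono (Nat.le_succ j)) (hFm j).nullMeasurableSet (measure_ne_top _ _)
    have h2 : D j ∩ X ⁻¹' A j = (F (j + 1) ∩ X ⁻¹' A j) \ (F j ∩ X ⁻¹' A j) := by
      ext ω; simp only [D, Set.mem_inter_iff, Set.mem_sdiff]; tauto
    rw [h2, measure_sdiff (Set.inter_subset_inter_left _ (hFmono (Nat.le_succ j)))
      ((hFm j).inter hXm).nullMeasurableSet (measure_ne_top _ _), hFX, hFX, h1,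
      ENNReal.mul_sub fun _ _ => measure_ne_top _ _]
  let E : Set Ω := (toMeasurable P S)ᶜ
  have hEm : MeasurableSet E := (measurableSet_toMeasurable _ _).compl
  have hES : E ⊆ Sᶜ := Set.compl_subset_compl.2 (subset_toMeasurable _ _)
  have hED : ∀ j, P (E ∩ D j) ≤ ε * P (D j) := by
    intro j
    have hnull : P (F (j + 1) ∩ ((F j)ᶜ ∩ E ∩ (X ⁻¹' A j)ᶜ)) = 0 := by
      rw [hFG _ _ (((hFm j).compl.inter hEm).inter (hX (hA j)).compl)]
      refine measure_mono_null ?_ (ae_iff.1 hS)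
      rintro ω ⟨hK, ⟨hFj, hE⟩, hXA⟩
      have hKj : K ω = j := by
        have h1 : K ω < j + 1 := hK
        have h2 : ¬ K ω < j := fun h => hFj (hHF j h)
        omega
      simp only [Set.mem_ofPred_eq, Classical.not_imp]
      exact ⟨by rw [hKj]; exact hXA, hES hE⟩
    calc P (E ∩ D j)
        ≤ P ((D j ∩ X ⁻¹' A j) ∪ (F (j + 1) ∩ ((F j)ᶜ ∩ E ∩ (X ⁻¹' A j)ᶜ))) := by
          refine measure_mono fun ω hω => ?_
          by_cases h : ω ∈ X ⁻¹' A j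
          · exact Or.inl ⟨hω.2, h⟩
          · exact Or.inr ⟨hω.2.1, ⟨hω.2.2, hω.1⟩, h⟩
      _ ≤ P (D j ∩ X ⁻¹' A j) + 0 := (measure_union_le _ _).trans_eq (by rw [hnull])
      _ ≤ ε * P (D j) := by rw [add_zero, hDX]; gcongr; exact hAε j
  have hcover : E ⊆ F 0 ∪ ⋃ j, E ∩ D j := by
    intro ω hω
    have hex : ∃ j, ω ∈ F j := ⟨K ω + 1, hHF _ (Nat.lt_succ_self (K ω))⟩
    by_cases h0 : Nat.find hex = 0
    · exact Or.inl (h0 ▸ Nat.find_spec hex)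
    · obtain ⟨j, hj⟩ := Nat.exists_eq_succ_of_ne_zero h0
      refine Or.inr (Set.mem_iUnion.2 ⟨j, hω, ?_, Nat.find_min hex (by omega)⟩)
      have := Nat.find_spec hex
      rwa [hj] at this
  have hE : P E ≤ ε := calc
    P E ≤ P (F 0) + ∑' j, P (E ∩ D j) :=
      (measure_mono hcover).trans ((measure_union_le _ _).trans
        (add_le_add le_rfl (measure_iUnion_le _)))
    _ ≤ 0 + ∑' j, ε * P (D j) := by rw [hF0]; gcongr with j; exact hED j
    _ = ε * P (⋃ j, D j) := by rw [zero_add, ENNReal.tsum_mul_left, measure_iUnion hDdisj hDm]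
    _ ≤ ε * 1 := by gcongr; exact prob_le_one
    _ = ε := mul_one _
  calc (1 : ℝ≥0∞) = P Set.univ := measure_univ.symm
    _ = P (toMeasurable P S ∪ E) := by rw [Set.union_compl_self]
    _ ≤ P (toMeasurable P S) + P E := measure_union_le _ _
    _ ≤ P S + ε := by rw [measure_toMeasurable]; gcongr

theorem integral_exp_mul_sq_gaussianReal {s : ℝ} (hs : s < 1 / 2) :
    ∫ x, Real.exp (s * x ^ 2) ∂gaussianReal 0 1 = (√(1 - 2 * s))⁻¹ := by
  have h12 : 0 < 1 - 2 * s := by linarith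
  have hpt : ∀ x : ℝ, gaussianPDFReal 0 1 x • Real.exp (s * x ^ 2) =
      (√(2 * Real.pi))⁻¹ * Real.exp (-(1 / 2 - s) * x ^ 2) := by
    intro x
    simp only [gaussianPDFReal, smul_eq_mul, NNReal.coe_one, mul_one, sub_zero, mul_assoc,
      ← Real.exp_add]
    congr 2
    ring
  rw [integral_gaussianReal_eq_integral_smul one_ne_zero]
  simp_rw [hpt]
  rw [integral_const_mul, integral_gaussian, ← Real.sqrt_inv, ← Real.sqrt_inv,
    ← Real.sqrt_mul (by positivity)]
  congr 1
  have : (1 / 2 - s) ≠ 0 := by linarith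
  field_simp

theorem integrable_exp_mul_sq_gaussianReal {s : ℝ} (hs : s < 1 / 2) :
    Integrable (fun x => Real.exp (s * x ^ 2)) (gaussianReal 0 1) := by
  by_contra h
  have h1 := integral_exp_mul_sq_gaussianReal hs
  rw [integral_undef h] at h1
  have : 0 < (√(1 - 2 * s))⁻¹ := by
    have : 0 < 1 - 2 * s := by linarith
    positivity
  linarith

theorem integrable_exp_sum_sq_gaussian {p : ℕ} {w : Fin p → ℝ} (hw : ∀ j, w j < 1 / 2) :
    Integrable (fun g : Fin p → ℝ => Real.exp (∑ j, w j * g j ^ 2))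
      (Measure.pi fun _ => gaussianReal 0 1) := by
  simp_rw [Real.exp_sum]
  exact Integrable.fintype_prod fun j => integrable_exp_mul_sq_gaussianReal (hw j)

theorem integral_exp_sum_sq_gaussian {p : ℕ} {w : Fin p → ℝ} (hw : ∀ j, w j < 1 / 2) :
    ∫ g : Fin p → ℝ, Real.exp (∑ j, w j * g j ^ 2) ∂(Measure.pi fun _ => gaussianReal 0 1) =
      ∏ j, (√(1 - 2 * w j))⁻¹ := by
  simp_rw [Real.exp_sum]
  rw [integral_fintype_prod_eq_prod (fun j x => Real.exp (w j * x ^ 2))]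
  exact Finset.prod_congr rfl fun j _ => integral_exp_mul_sq_gaussianReal (hw j)

theorem inv_sqrt_one_sub_le_exp {x : ℝ} (h0 : 0 ≤ x) (h1 : x ≤ 1 / 2) :
    (√(1 - x))⁻¹ ≤ Real.exp x := by
  rw [inv_le_comm₀ (Real.sqrt_pos.2 (by linarith)) (Real.exp_pos _), ← Real.exp_neg]
  refine Real.le_sqrt_of_sq_le ?_
  rw [← Real.exp_nat_mul]
  have h2 : (0 : ℝ) < 1 - x := by linarith
  rw [← Real.le_log_iff_exp_le h2]
  have := Real.one_sub_inv_le_log_of_pos h2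
  refine le_trans ?_ this
  rw [le_sub_comm, inv_le_iff_one_le_mul₀ h2]
  push_cast
  nlinarith

theorem inv_sqrt_one_add_le_exp {x : ℝ} (h0 : 0 ≤ x) (h1 : x ≤ 1) :
    (√(1 + x))⁻¹ ≤ Real.exp (-(x / 4)) := by
  rw [Real.exp_neg]
  refine inv_anti₀ (Real.exp_pos _) (Real.le_sqrt_of_sq_le ?_)
  rw [← Real.exp_nat_mul]
  have h2 : (0 : ℝ) < 1 + x := by linarith
  rw [← Real.le_log_iff_exp_le h2]
  refine le_trans ?_ (Real.one_sub_inv_le_log_of_pos h2)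
  rw [le_sub_comm, inv_le_iff_one_le_mul₀ h2]
  push_cast
  nlinarith

/-- Upper deviation of a weighted sum of squares of independent standard Gaussians. -/
theorem gaussian_sum_sq_upper_tail {p : ℕ} {w : Fin p → ℝ} {m : ℝ} (hm : 0 < m) (hw0 : ∀ j, 0 ≤ w j)
    (hwm : ∀ j, w j ≤ m) (K : ℝ) :
    (Measure.pi fun _ : Fin p => gaussianReal 0 1).real
      {g | 2 * ∑ j, w j + 4 * K * m ≤ ∑ j, w j * g j ^ 2} ≤ Real.exp (-K) := by
  set t : ℝ := 1 / (4 * m) with ht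
  have ht0 : 0 < t := by positivity
  have htw : ∀ j, t * w j ≤ 1 / 4 := fun j => by
    rw [ht, one_div_mul_eq_div, div_le_iff₀ (by positivity)]
    linarith [hwm j]
  have hmul : ∀ g : Fin p → ℝ, t * ∑ j, w j * g j ^ 2 = ∑ j, t * w j * g j ^ 2 := fun g => by
    rw [Finset.mul_sum]; simp_rw [mul_assoc]
  have hlt : ∀ j, t * w j < 1 / 2 := fun j => by linarith [htw j]
  have h_integrable := integrable_exp_sum_sq_gaussian hlt
  have hval := integral_exp_sum_sq_gaussian hlt
  simp_rw [← hmul] at h_integrable hval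
  refine (measure_ge_le_exp_mul_mgf _ ht0.le h_integrable).trans ?_
  rw [mgf, hval]
  calc _ ≤ Real.exp (-t * (2 * ∑ j, w j + 4 * K * m)) * ∏ j, Real.exp (2 * (t * w j)) := by
        gcongr with j
        exact inv_sqrt_one_sub_le_exp (by have := hw0 j; positivity) (by linarith [htw j])
    _ = Real.exp (-K) := by
        rw [← Real.exp_sum, ← Real.exp_add, ← Finset.mul_sum, ← Finset.mul_sum]
        congr 1
        rw [ht]
        field_simp
        ring

/-- Lower deviation of a weighted sum of squares of independent standard Gaussians. -/
theorem gaussian_sum_sq_lower_tail {p : ℕ} {w : Fin p → ℝ} {m : ℝ} (hm : 0 < m) (hw0 : ∀ j, 0 ≤ w j)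
    (hwm : ∀ j, w j ≤ m) :
    (Measure.pi fun _ : Fin p => gaussianReal 0 1).real
      {g | ∑ j, w j * g j ^ 2 ≤ (∑ j, w j) / 4} ≤ Real.exp (-((∑ j, w j) / m / 8)) := by
  set t : ℝ := 1 / (2 * m) with ht
  have ht0 : 0 < t := by positivity
  have htw : ∀ j, t * w j ≤ 1 / 2 := fun j => by
    rw [ht, one_div_mul_eq_div, div_le_iff₀ (by positivity)]
    linarith [hwm j]
  have htw0 : ∀ j, 0 ≤ t * w j := fun j => mul_nonneg ht0.le (hw0 j)
  have hmul : ∀ g : Fin p → ℝ, -t * ∑ j, w j * g j ^ 2 = ∑ j, -(t * w j) * g j ^ 2 := fun g => by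
    rw [Finset.mul_sum]
    exact Finset.sum_congr rfl fun j _ => by ring
  have hlt : ∀ j, -(t * w j) < 1 / 2 := fun j => by linarith [htw0 j]
  have h_integrable := integrable_exp_sum_sq_gaussian hlt
  have hval := integral_exp_sum_sq_gaussian hlt
  simp_rw [← hmul] at h_integrable hval
  refine (measure_le_le_exp_mul_mgf _ (neg_nonpos.2 ht0.le) h_integrable).trans ?_
  rw [mgf, hval]
  calc _ ≤ Real.exp (-(-t) * ((∑ j, w j) / 4)) * ∏ j, Real.exp (-((2 * (t * w j)) / 4)) := by
        gcongr with j
        have := inv_sqrt_one_add_le_exp (x := 2 * (t * w j)) (by linarith [htw0 j])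
          (by linarith [htw j])
        rwa [mul_neg, sub_neg_eq_add]
    _ = Real.exp (-((∑ j, w j) / m / 8)) := by
        rw [← Real.exp_sum, ← Real.exp_add, Finset.sum_neg_distrib, ← Finset.sum_div,
          ← Finset.mul_sum, ← Finset.mul_sum]
        congr 1
        rw [ht]
        field_simp
        ring

theorem integral_cexp_dotProduct_stdGaussian {p : ℕ} (b : Fin p → ℝ) :
    ∫ g : Fin p → ℝ, Complex.exp ((b ⬝ᵥ g : ℝ) * Complex.I) ∂(stdGaussian p) =
      Complex.exp (-((b ⬝ᵥ b : ℝ) : ℂ) / 2) := by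
  have h1 : ∀ g : Fin p → ℝ, Complex.exp ((b ⬝ᵥ g : ℝ) * Complex.I) =
      ∏ j, Complex.exp (b j * g j * Complex.I) := fun g => by
    rw [← Complex.exp_sum, ← Finset.sum_mul]
    simp [dotProduct]
  have h2 : ∀ c : ℝ, ∫ x : ℝ, Complex.exp (c * x * Complex.I) ∂(gaussianReal 0 1) =
      Complex.exp (-(c : ℂ) ^ 2 / 2) := fun c => by
    have := charFun_gaussianReal (μ := 0) (v := 1) c
    rw [charFun_apply_real] at this
    rw [this]
    congr 1
    simp
    ring
  simp_rw [h1]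
  rw [_root_.stdGaussian, integral_fintype_prod_eq_prod
    (fun j (x : ℝ) => Complex.exp (b j * x * Complex.I))]
  simp_rw [h2]
  rw [← Complex.exp_sum, ← Finset.sum_div, Finset.sum_neg_distrib]
  simp [dotProduct, sq]

instance isProbabilityMeasure_stdGaussian (p : ℕ) :
    IsProbabilityMeasure (stdGaussian p : Measure (Fin p → ℝ)) := by
  unfold _root_.stdGaussian; infer_instance

theorem measurable_mulVec_pi {m p : ℕ} (A : Matrix (Fin m) (Fin p) ℝ) :
    Measurable fun g : Fin p → ℝ => A *ᵥ g :=
  (LinearMap.continuous_of_finiteDimensional A.mulVecLin).measurable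

instance isProbabilityMeasure_mvGaussian (p : ℕ) (lam : ℕ → ℝ)
    (Porth : Matrix (Fin p) (Fin p) ℝ) : IsProbabilityMeasure (mvGaussian p lam Porth) :=
  Measure.isProbabilityMeasure_map (measurable_mulVec_pi _).aemeasurable

theorem integral_cexp_dotProduct_mvGaussian {p : ℕ} (lam : ℕ → ℝ)
    (hlam : ∀ j : Fin p, 0 ≤ lam (j + 1)) {Porth : Matrix (Fin p) (Fin p) ℝ}
    (hP : Porth * Porthᵀ = 1) (c : ℝ) (l : Fin p → ℝ) :
    ∫ x, Complex.exp ((c * (l ⬝ᵥ (Porthᵀ *ᵥ x)) : ℝ) * Complex.I) ∂(mvGaussian p lam Porth) =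
      Complex.exp (-((c ^ 2 * ∑ j : Fin p, lam (j + 1) * l j ^ 2 : ℝ) : ℂ) / 2) := by
  have hP' : Porthᵀ * Porth = 1 := mul_eq_one_comm.1 hP
  set s : Fin p → ℝ := fun j => √(lam (j + 1))
  set b : Fin p → ℝ := c • (Porth *ᵥ (s * l)) with hb
  have h1 : ∀ g : Fin p → ℝ, c * (l ⬝ᵥ (Porthᵀ *ᵥ (covHalf p lam Porth *ᵥ g))) = b ⬝ᵥ g := by
    intro g
    have h2 : Porthᵀ *ᵥ (covHalf p lam Porth *ᵥ g) = Matrix.diagonal s *ᵥ (Porthᵀ *ᵥ g) := by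
      rw [covHalf, mulVec_mulVec, mulVec_mulVec, ← Matrix.mul_assoc, ← Matrix.mul_assoc, hP',
        Matrix.one_mul]
    have h3 : l ⬝ᵥ (Matrix.diagonal s *ᵥ (Porthᵀ *ᵥ g)) = (s * l) ⬝ᵥ (Porthᵀ *ᵥ g) := by
      simp only [dotProduct, mulVec_diagonal, Pi.mul_apply]
      exact Finset.sum_congr rfl fun j _ => by ring
    rw [h2, h3, hb, smul_dotProduct, dotProduct_mulVec, vecMul_transpose, smul_eq_mul]
  have h4 : b ⬝ᵥ b = c ^ 2 * ∑ j : Fin p, lam (j + 1) * l j ^ 2 := by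
    rw [hb, smul_dotProduct, dotProduct_smul, dotProduct_mulVec, ← mulVec_transpose,
      mulVec_mulVec, hP', one_mulVec, smul_eq_mul, smul_eq_mul, ← mul_assoc, ← sq]
    congr 1
    refine Finset.sum_congr rfl fun j _ => ?_
    have := Real.mul_self_sqrt (hlam j)
    simp only [Pi.mul_apply, s]
    linear_combination (l j) ^ 2 * this
  rw [mvGaussian, integral_map (measurable_mulVec_pi _).aemeasurable]
  · simp_rw [h1]
    rw [integral_cexp_dotProduct_stdGaussian, h4]
  · have := measurable_mulVec_pi Porthᵀ
    refine Measurable.aestronglyMeasurable ?_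
    unfold dotProduct
    fun_prop

/-- Coordinates, in the eigenbasis, of the combination `∑ i, v i • x i` of the rows of `x`. -/
def rowComb {n p : ℕ} (Porth : Matrix (Fin p) (Fin p) ℝ) (v : Fin n → ℝ)
    (x : Fin n → Fin p → ℝ) : Fin p → ℝ := fun j => ∑ i, v i * (Porthᵀ *ᵥ x i) j

theorem measurable_rowComb {n p : ℕ} (Porth : Matrix (Fin p) (Fin p) ℝ) (v : Fin n → ℝ) :
    Measurable (rowComb Porth v) := by
  have := measurable_mulVec_pi Porthᵀ
  unfold rowComb
  fun_prop

theorem map_rowComb {n p : ℕ} (lam : ℕ → ℝ)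
    (hlam : ∀ j : Fin p, 0 ≤ lam (j + 1)) {Porth : Matrix (Fin p) (Fin p) ℝ}
    (hP : Porth * Porthᵀ = 1) {v : Fin n → ℝ} (hv : ∑ i, v i ^ 2 = 1) :
    Measure.map (rowComb Porth v) (Measure.pi fun _ : Fin n => mvGaussian p lam Porth) =
      Measure.map (fun (g : Fin p → ℝ) (j : Fin p) => √(lam (j + 1)) * g j) (stdGaussian p) := by
  have hm1 := measurable_rowComb Porth v
  have hm2 : Measurable fun (g : Fin p → ℝ) (j : Fin p) => √(lam (j + 1)) * g j := by fun_prop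
  have := Measure.isProbabilityMeasure_map (μ := Measure.pi fun _ : Fin n => mvGaussian p lam Porth)
    hm1.aemeasurable
  have := Measure.isProbabilityMeasure_map (μ := stdGaussian p) hm2.aemeasurable
  refine Measure.ext_of_charFunDual (funext fun L => ?_)
  set l : Fin p → ℝ := fun j => L (Pi.single j 1) with hl
  have hL : ∀ y : Fin p → ℝ, L y = l ⬝ᵥ y := fun y => by
    conv_lhs => rw [pi_eq_sum_univ' y]
    simp [map_sum, dotProduct, hl, mul_comm]
  have hLm : ∀ μ : Measure (Fin p → ℝ),
      AEStronglyMeasurable (fun y => Complex.exp (L y * Complex.I)) μ := fun μ => by fun_prop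
  rw [charFunDual_apply, charFunDual_apply, integral_map hm1.aemeasurable (hLm _),
    integral_map hm2.aemeasurable (hLm _)]
  have h1 : ∀ x : Fin n → Fin p → ℝ, Complex.exp (L (rowComb Porth v x) * Complex.I) =
      ∏ i, Complex.exp ((v i * (l ⬝ᵥ (Porthᵀ *ᵥ x i)) : ℝ) * Complex.I) := fun x => by
    rw [← Complex.exp_sum, ← Finset.sum_mul, hL, ← Complex.ofReal_sum]
    congr 3
    simp only [dotProduct, rowComb, Finset.mul_sum]
    rw [Finset.sum_comm]
    exact Finset.sum_congr rfl fun i _ => Finset.sum_congr rfl fun j _ => by ring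
  have h2 : ∀ g : Fin p → ℝ, L (fun j : Fin p => √(lam (j + 1)) * g j) =
      (fun j : Fin p => √(lam (j + 1)) * l j) ⬝ᵥ g := fun g => by
    rw [hL]
    exact Finset.sum_congr rfl fun j _ => by ring
  have h3 : ∑ j : Fin p, lam (j + 1) * l j ^ 2 =
      (fun j : Fin p => √(lam (j + 1)) * l j) ⬝ᵥ (fun j : Fin p => √(lam (j + 1)) * l j) := by
    refine Finset.sum_congr rfl fun j _ => ?_
    have := Real.mul_self_sqrt (hlam j)
    linear_combination -(l j) ^ 2 * this
  simp_rw [h1, h2]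
  rw [integral_fintype_prod_eq_prod (fun i (y : Fin p → ℝ) =>
    Complex.exp ((v i * (l ⬝ᵥ (Porthᵀ *ᵥ y)) : ℝ) * Complex.I)),
    integral_cexp_dotProduct_stdGaussian]
  simp_rw [integral_cexp_dotProduct_mvGaussian lam hlam hP]
  rw [← Complex.exp_sum, ← Finset.sum_div, Finset.sum_neg_distrib, ← Complex.ofReal_sum,
    ← Finset.sum_mul, hv, one_mul, h3]

/-- The weighted quadratic form `∑ j, a j * (Pᵀ xᵀ v)_j ^ 2`. -/
def weightedQuad {n p : ℕ} (Porth : Matrix (Fin p) (Fin p) ℝ) (a : Fin p → ℝ) (v : Fin n → ℝ)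
    (x : Fin n → Fin p → ℝ) : ℝ := ∑ j, a j * rowComb Porth v x j ^ 2

theorem measurable_weightedQuad {n p : ℕ} (Porth : Matrix (Fin p) (Fin p) ℝ) (a : Fin p → ℝ)
    (v : Fin n → ℝ) : Measurable (weightedQuad Porth a v) := by
  have := measurable_rowComb Porth v
  unfold weightedQuad
  fun_prop

theorem measure_weightedQuad_preimage {n p : ℕ} (lam : ℕ → ℝ)
    (hlam : ∀ j : Fin p, 0 ≤ lam (j + 1)) {Porth : Matrix (Fin p) (Fin p) ℝ}
    (hP : Porth * Porthᵀ = 1) {v : Fin n → ℝ} (hv : ∑ i, v i ^ 2 = 1) (a : Fin p → ℝ)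
    {B : Set ℝ} (hB : MeasurableSet B) :
    (Measure.pi fun _ : Fin n => mvGaussian p lam Porth) (weightedQuad Porth a v ⁻¹' B) =
      (Measure.pi fun _ : Fin p => gaussianReal 0 1)
        {g | ∑ j, a j * lam (j + 1) * g j ^ 2 ∈ B} := by
  let q : (Fin p → ℝ) → ℝ := fun y => ∑ j, a j * y j ^ 2
  have hq : Measurable q := by fun_prop
  have hm : Measurable fun (g : Fin p → ℝ) (j : Fin p) => √(lam (j + 1)) * g j := by fun_prop
  have h1 : weightedQuad Porth a v ⁻¹' B = rowComb Porth v ⁻¹' (q ⁻¹' B) := rfl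
  rw [h1, ← Measure.map_apply (measurable_rowComb Porth v) (hq hB), map_rowComb lam hlam hP hv,
    Measure.map_apply hm (hq hB)]
  have h2 : ∀ g : Fin p → ℝ, q (fun j : Fin p => √(lam (j + 1)) * g j) =
      ∑ j, a j * lam (j + 1) * g j ^ 2 := fun g => by
    refine Finset.sum_congr rfl fun j _ => ?_
    rw [mul_pow, Real.sq_sqrt (hlam j), mul_assoc]
  simp_rw [← h2]
  rfl

/-- Designs for which the weighted form exceeds `B` at a point of the net `s`. -/
def netUpper {n p : ℕ} (Porth : Matrix (Fin p) (Fin p) ℝ) (a : Fin p → ℝ)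
    (s : Finset (EuclideanSpace ℝ (Fin n))) (B : ℝ) : Set (Fin n → Fin p → ℝ) :=
  ⋃ u ∈ s, weightedQuad Porth a u ⁻¹' Set.Ici B

/-- Designs for which the weighted form is at most `B` at a point of the net `s`. -/
def netLower {n p : ℕ} (Porth : Matrix (Fin p) (Fin p) ℝ) (a : Fin p → ℝ)
    (s : Finset (EuclideanSpace ℝ (Fin n))) (B : ℝ) : Set (Fin n → Fin p → ℝ) :=
  ⋃ u ∈ s, weightedQuad Porth a u ⁻¹' Set.Iic B

theorem measurableSet_netUpper {n p : ℕ} (Porth : Matrix (Fin p) (Fin p) ℝ) (a : Fin p → ℝ)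
    (s : Finset (EuclideanSpace ℝ (Fin n))) (B : ℝ) : MeasurableSet (netUpper Porth a s B) :=
  s.measurableSet_biUnion fun u _ => measurable_weightedQuad Porth a u measurableSet_Ici

theorem measurableSet_netLower {n p : ℕ} (Porth : Matrix (Fin p) (Fin p) ℝ) (a : Fin p → ℝ)
    (s : Finset (EuclideanSpace ℝ (Fin n))) (B : ℝ) : MeasurableSet (netLower Porth a s B) :=
  s.measurableSet_biUnion fun u _ => measurable_weightedQuad Porth a u measurableSet_Iic

theorem sum_sq_eq_norm_sq {n : ℕ} (u : EuclideanSpace ℝ (Fin n)) : ∑ i, u i ^ 2 = ‖u‖ ^ 2 := by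
  rw [EuclideanSpace.norm_sq_eq]; simp

theorem measure_biUnion_net_le {n : ℕ} {α : Type*} [MeasurableSpace α] (μ : Measure α)
    (s : Finset (EuclideanSpace ℝ (Fin n))) (hcard : (s.card : ℝ) ≤ 33 ^ n)
    (A : EuclideanSpace ℝ (Fin n) → Set α) {δ : ℝ} (hδ : δ ≤ Real.exp (-(5 * n)))
    (hA : ∀ u ∈ s, μ (A u) ≤ ENNReal.ofReal δ) :
    μ (⋃ u ∈ s, A u) ≤ ENNReal.ofReal (Real.exp (-n)) := by
  have h33 : (33 : ℝ) ≤ Real.exp 4 := by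
    have h1 : Real.exp 4 = Real.exp 1 ^ 4 := by rw [← Real.exp_nat_mul]; norm_num
    have h2 := Real.exp_one_gt_d9
    rw [h1]
    calc (33 : ℝ) ≤ 2.7 ^ 4 := by norm_num
      _ ≤ _ := by gcongr; linarith
  calc μ (⋃ u ∈ s, A u) ≤ ∑ u ∈ s, μ (A u) := measure_biUnion_finset_le _ _
    _ ≤ ∑ u ∈ s, ENNReal.ofReal (Real.exp (-(5 * n))) :=
      Finset.sum_le_sum fun u hu => (hA u hu).trans (ENNReal.ofReal_le_ofReal hδ)
    _ = ENNReal.ofReal (s.card * Real.exp (-(5 * n))) := by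
      rw [Finset.sum_const, nsmul_eq_mul, ENNReal.ofReal_mul (by positivity),
        ENNReal.ofReal_natCast]
    _ ≤ ENNReal.ofReal (Real.exp (-n)) := by
      refine ENNReal.ofReal_le_ofReal ?_
      calc (s.card : ℝ) * Real.exp (-(5 * n)) ≤ Real.exp 4 ^ n * Real.exp (-(5 * n)) := by
            gcongr
            exact hcard.trans (by gcongr)
        _ = Real.exp (-n) := by
          rw [← Real.exp_nat_mul, ← Real.exp_add]
          congr 1
          ring

theorem measure_netUpper_le {n p : ℕ} (lam : ℕ → ℝ)
    (hlam : ∀ j : Fin p, 0 ≤ lam (j + 1)) {Porth : Matrix (Fin p) (Fin p) ℝ}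
    (hP : Porth * Porthᵀ = 1) {a : Fin p → ℝ} (ha : ∀ j, 0 ≤ a j) {m : ℝ} (hm : 0 < m)
    (ham : ∀ j, a j * lam (j + 1) ≤ m) (s : Finset (EuclideanSpace ℝ (Fin n)))
    (hs : ∀ u ∈ s, ‖u‖ = 1) (hcard : (s.card : ℝ) ≤ 33 ^ n) :
    (Measure.pi fun _ : Fin n => mvGaussian p lam Porth)
      (netUpper Porth a s (2 * ∑ j, a j * lam (j + 1) + 20 * n * m)) ≤
      ENNReal.ofReal (Real.exp (-n)) := by
  refine measure_biUnion_net_le _ s hcard _ le_rfl fun u hu => ?_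
  rw [measure_weightedQuad_preimage lam hlam hP
    (by rw [sum_sq_eq_norm_sq, hs u hu, one_pow]) a measurableSet_Ici]
  have := gaussian_sum_sq_upper_tail (w := fun j => a j * lam (j + 1)) hm
    (fun j => mul_nonneg (ha j) (hlam j)) ham (5 * n)
  rw [← ofReal_measureReal]
  refine ENNReal.ofReal_le_ofReal (le_trans (le_of_eq ?_) this)
  simp only [Set.mem_Ici]
  rw [show 4 * (5 * (n : ℝ)) * m = 20 * n * m by ring]

theorem measure_netLower_le {n p : ℕ} (lam : ℕ → ℝ)
    (hlam : ∀ j : Fin p, 0 ≤ lam (j + 1)) {Porth : Matrix (Fin p) (Fin p) ℝ}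
    (hP : Porth * Porthᵀ = 1) {a : Fin p → ℝ} (ha : ∀ j, 0 ≤ a j) {m : ℝ} (hm : 0 < m)
    (ham : ∀ j, a j * lam (j + 1) ≤ m) (hsum : 40 * n ≤ (∑ j, a j * lam (j + 1)) / m)
    (s : Finset (EuclideanSpace ℝ (Fin n)))
    (hs : ∀ u ∈ s, ‖u‖ = 1) (hcard : (s.card : ℝ) ≤ 33 ^ n) :
    (Measure.pi fun _ : Fin n => mvGaussian p lam Porth)
      (netLower Porth a s ((∑ j, a j * lam (j + 1)) / 4)) ≤
      ENNReal.ofReal (Real.exp (-n)) := by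
  refine measure_biUnion_net_le _ s hcard _
    (Real.exp_le_exp.2 (?_ : -((∑ j, a j * lam (j + 1)) / m / 8) ≤ _)) fun u hu => ?_
  · linarith
  rw [measure_weightedQuad_preimage lam hlam hP
    (by rw [sum_sq_eq_norm_sq, hs u hu, one_pow]) a measurableSet_Iic]
  have := gaussian_sum_sq_lower_tail (w := fun j => a j * lam (j + 1)) hm
    (fun j => mul_nonneg (ha j) (hlam j)) ham
  rw [← ofReal_measureReal]
  exact ENNReal.ofReal_le_ofReal this

/-- The linear map `v ↦ diag(√a) Pᵀ xᵀ v`. -/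
def weightedMap {n p : ℕ} (Porth : Matrix (Fin p) (Fin p) ℝ) (a : Fin p → ℝ)
    (x : Fin n → Fin p → ℝ) : EuclideanSpace ℝ (Fin n) →L[ℝ] EuclideanSpace ℝ (Fin p) :=
  LinearMap.toContinuousLinearMap
    { toFun := fun v => WithLp.toLp 2 fun j => √(a j) * rowComb Porth v x j
      map_add' := fun v w => by
        ext j
        simp [rowComb, add_mul, Finset.sum_add_distrib, mul_add]
      map_smul' := fun c v => by
        ext j
        simp only [rowComb, PiLp.smul_apply, smul_eq_mul, RingHom.id_apply, Finset.mul_sum]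
        exact Finset.sum_congr rfl fun i _ => by ring }

theorem norm_weightedMap_sq {n p : ℕ} (Porth : Matrix (Fin p) (Fin p) ℝ) {a : Fin p → ℝ}
    (ha : ∀ j, 0 ≤ a j) (x : Fin n → Fin p → ℝ) (v : EuclideanSpace ℝ (Fin n)) :
    ‖weightedMap Porth a x v‖ ^ 2 = weightedQuad Porth a v x := by
  rw [← sum_sq_eq_norm_sq, weightedQuad]
  refine Finset.sum_congr rfl fun j _ => ?_
  change (√(a j) * rowComb Porth v x j) ^ 2 = _
  rw [mul_pow, Real.sq_sqrt (ha j)]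

theorem norm_weightedMap_le {n p : ℕ} (Porth : Matrix (Fin p) (Fin p) ℝ) {a : Fin p → ℝ}
    (ha : ∀ j, 0 ≤ a j) {x : Fin n → Fin p → ℝ} {s : Finset (EuclideanSpace ℝ (Fin n))}
    (hnet : ∀ v : EuclideanSpace ℝ (Fin n), ‖v‖ = 1 → ∃ u ∈ s, ‖v - u‖ ≤ 1 / 16) {B : ℝ}
    (hx : x ∉ netUpper Porth a s B) : ‖weightedMap Porth a x‖ ≤ 16 / 15 * √B := by
  have := opNorm_le_of_sphere_net (weightedMap Porth a x) (s : Set _) (Real.sqrt_nonneg B)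
    (by norm_num : (0 : ℝ) ≤ 1 / 16) (by norm_num) hnet fun u hu => by
      refine Real.le_sqrt_of_sq_le ?_
      rw [norm_weightedMap_sq Porth ha]
      by_contra! h
      exact hx (Set.mem_biUnion (x := u) hu h.le)
  refine this.trans (le_of_eq ?_)
  ring

theorem weightedQuad_le {n p : ℕ} (Porth : Matrix (Fin p) (Fin p) ℝ) {a : Fin p → ℝ}
    (ha : ∀ j, 0 ≤ a j) {x : Fin n → Fin p → ℝ} {s : Finset (EuclideanSpace ℝ (Fin n))}
    (hnet : ∀ v : EuclideanSpace ℝ (Fin n), ‖v‖ = 1 → ∃ u ∈ s, ‖v - u‖ ≤ 1 / 16) {B : ℝ}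
    (hB : 0 ≤ B) (hx : x ∉ netUpper Porth a s B) (v : Fin n → ℝ) :
    weightedQuad Porth a v x ≤ 256 / 225 * B * ∑ i, v i ^ 2 := by
  have h1 := norm_weightedMap_sq Porth ha x (WithLp.toLp 2 v)
  have h2 := sum_sq_eq_norm_sq (WithLp.toLp 2 v)
  have h3 : ‖weightedMap Porth a x (WithLp.toLp 2 v)‖ ≤ 16 / 15 * √B * ‖WithLp.toLp 2 v‖ :=
    ((weightedMap Porth a x).le_opNorm _).trans
      (by gcongr; exact norm_weightedMap_le Porth ha hnet hx)
  calc weightedQuad Porth a v x = ‖weightedMap Porth a x (WithLp.toLp 2 v)‖ ^ 2 := h1.symm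
    _ ≤ (16 / 15 * √B * ‖WithLp.toLp 2 v‖) ^ 2 := by gcongr
    _ = 256 / 225 * B * ∑ i, v i ^ 2 := by
      rw [mul_pow, mul_pow, Real.sq_sqrt hB, ← h2]
      norm_num

theorem le_weightedQuad {n p : ℕ} (Porth : Matrix (Fin p) (Fin p) ℝ) {a : Fin p → ℝ}
    (ha : ∀ j, 0 ≤ a j) {x : Fin n → Fin p → ℝ} {s : Finset (EuclideanSpace ℝ (Fin n))}
    (hnet : ∀ v : EuclideanSpace ℝ (Fin n), ‖v‖ = 1 → ∃ u ∈ s, ‖v - u‖ ≤ 1 / 16) {B R : ℝ}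
    (hR : 0 ≤ R) (hBR : B ≤ 9 / 4 * R) (hxu : x ∉ netUpper Porth a s B)
    (hxl : x ∉ netLower Porth a s (R / 4)) (v : Fin n → ℝ) :
    4 / 25 * R * ∑ i, v i ^ 2 ≤ weightedQuad Porth a v x := by
  set T := weightedMap Porth a x with hT
  have hTn : ‖T‖ ≤ 8 / 5 * √R := by
    refine (norm_weightedMap_le Porth ha hnet hxu).trans ?_
    have h1 : √B ≤ 3 / 2 * √R := by
      rw [Real.sqrt_le_iff]
      refine ⟨by positivity, hBR.trans_eq ?_⟩
      rw [mul_pow, Real.sq_sqrt hR]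
      norm_num
    linarith
  have hunit : ∀ w : EuclideanSpace ℝ (Fin n), ‖w‖ = 1 → 2 / 5 * √R ≤ ‖T w‖ := by
    intro w hw
    obtain ⟨u, hu, huw⟩ := hnet w hw
    have h1 : 1 / 2 * √R ≤ ‖T u‖ := by
      refine le_of_sq_le_sq ?_ (norm_nonneg _)
      rw [hT, norm_weightedMap_sq Porth ha, mul_pow, Real.sq_sqrt hR]
      by_contra! h
      refine hxl (Set.mem_biUnion (x := u) hu ?_)
      simp only [Set.mem_preimage, Set.mem_Iic]
      linarith
    have h2 : ‖T u‖ ≤ ‖T w‖ + ‖T (w - u)‖ := by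
      calc ‖T u‖ = ‖T w - T (w - u)‖ := by rw [← map_sub]; simp
        _ ≤ _ := norm_sub_le _ _
    have h3 : ‖T (w - u)‖ ≤ 8 / 5 * √R * (1 / 16) :=
      (T.le_opNorm _).trans (by gcongr)
    linarith
  have hall : 2 / 5 * √R * ‖WithLp.toLp 2 v‖ ≤ ‖T (WithLp.toLp 2 v)‖ := by
    by_cases h0 : WithLp.toLp 2 v = 0
    · simp [h0]
    · have hpos : 0 < ‖WithLp.toLp 2 v‖ := norm_pos_iff.2 h0
      have := hunit (‖WithLp.toLp 2 v‖⁻¹ • WithLp.toLp 2 v) (by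
        rw [norm_smul, norm_inv, norm_norm, inv_mul_cancel₀ hpos.ne'])
      rw [map_smul, norm_smul, norm_inv, norm_norm, inv_mul_eq_div, le_div_iff₀ hpos] at this
      exact this
  calc 4 / 25 * R * ∑ i, v i ^ 2 = (2 / 5 * √R * ‖WithLp.toLp 2 v‖) ^ 2 := by
        rw [mul_pow, mul_pow, Real.sq_sqrt hR, ← sum_sq_eq_norm_sq]
        norm_num
    _ ≤ ‖T (WithLp.toLp 2 v)‖ ^ 2 := by gcongr
    _ = weightedQuad Porth a v x := norm_weightedMap_sq Porth ha x _

theorem enorm2_eq_norm {m : ℕ} (v : Fin m → ℝ) : enorm2 v = ‖WithLp.toLp 2 v‖ := by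
  simp [enorm2, EuclideanSpace.norm_eq]

theorem enorm2_nonneg {m : ℕ} (v : Fin m → ℝ) : 0 ≤ enorm2 v := Real.sqrt_nonneg _

theorem enorm2_sq {m : ℕ} (v : Fin m → ℝ) : enorm2 v ^ 2 = ∑ i, v i ^ 2 :=
  Real.sq_sqrt (Finset.sum_nonneg fun _ _ => sq_nonneg _)

theorem enorm2_add_le {m : ℕ} (v w : Fin m → ℝ) : enorm2 (v + w) ≤ enorm2 v + enorm2 w := by
  simp only [enorm2_eq_norm, WithLp.toLp_add]
  exact norm_add_le _ _

theorem enorm2_sub_le {m : ℕ} (v w : Fin m → ℝ) : enorm2 (v - w) ≤ enorm2 v + enorm2 w := by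
  simp only [enorm2_eq_norm, WithLp.toLp_sub]
  exact norm_sub_le _ _

theorem measurable_enorm2 {m : ℕ} : Measurable (enorm2 : (Fin m → ℝ) → ℝ) := by
  unfold enorm2
  fun_prop

theorem sum_sq_transpose_mulVec {p : ℕ} {Porth : Matrix (Fin p) (Fin p) ℝ}
    (hP : Porth * Porthᵀ = 1) (d : Fin p → ℝ) :
    ∑ j, (Porthᵀ *ᵥ d) j ^ 2 = ∑ j, d j ^ 2 := by
  have : (Porthᵀ *ᵥ d) ⬝ᵥ (Porthᵀ *ᵥ d) = d ⬝ᵥ d := by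
    rw [dotProduct_mulVec, vecMul_transpose, mulVec_mulVec, hP, one_mulVec]
  simpa [dotProduct, sq] using this

theorem rowComb_eq_mulVec {n p : ℕ} (Porth : Matrix (Fin p) (Fin p) ℝ) (v : Fin n → ℝ)
    (x : Matrix (Fin n) (Fin p) ℝ) : rowComb Porth v x = Porthᵀ *ᵥ (v ᵥ* x) := by
  ext j
  simp only [rowComb, mulVec, vecMul, dotProduct, Finset.mul_sum]
  rw [Finset.sum_comm]
  exact Finset.sum_congr rfl fun i _ => Finset.sum_congr rfl fun k _ => by ring

/-- If the singular values of `x` are at least `√c`, every `y` has a preimage of norm at most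
`‖y‖ / √c`. -/
theorem exists_mulVec_eq_of_coercive {n p : ℕ} (x : Matrix (Fin n) (Fin p) ℝ) {c : ℝ} (hc : 0 < c)
    (hx : ∀ v : Fin n → ℝ, c * ∑ i, v i ^ 2 ≤ ∑ k, (v ᵥ* x) k ^ 2) (y : Fin n → ℝ) :
    ∃ u : Fin p → ℝ, x *ᵥ u = y ∧ c * ∑ k, u k ^ 2 ≤ ∑ i, y i ^ 2 := by
  have hquad : ∀ v : Fin n → ℝ, v ⬝ᵥ ((x * xᵀ) *ᵥ v) = ∑ k, (v ᵥ* x) k ^ 2 := fun v => by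
    rw [← mulVec_mulVec, dotProduct_mulVec, mulVec_transpose]
    simp [dotProduct, sq]
  have hinj : Function.Injective (x * xᵀ).mulVecLin := by
    refine (injective_iff_map_eq_zero _).2 fun v hv => ?_
    have h1 := hquad v
    rw [mulVecLin_apply] at hv
    rw [hv, dotProduct_zero] at h1
    have h2 : ∑ i, v i ^ 2 ≤ 0 := by
      have := hx v
      rw [← h1] at this
      exact nonpos_of_mul_nonpos_right this hc
    have h3 := (Finset.sum_eq_zero_iff_of_nonneg fun i _ => sq_nonneg (v i)).1
      (le_antisymm h2 (Finset.sum_nonneg fun i _ => sq_nonneg (v i)))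
    ext i
    simpa using h3 i (Finset.mem_univ i)
  obtain ⟨w, hw⟩ := LinearMap.injective_iff_surjective.1 hinj y
  rw [mulVecLin_apply] at hw
  refine ⟨w ᵥ* x, by rw [← mulVec_transpose, mulVec_mulVec, hw], ?_⟩
  have h1 := hquad w
  rw [hw] at h1
  have h2 := hx w
  have h3 : (w ⬝ᵥ y) ^ 2 ≤ (∑ i, w i ^ 2) * ∑ i, y i ^ 2 :=
    Finset.sum_mul_sq_le_sq_mul_sq _ _ _
  rw [h1] at h3
  set U := ∑ k, (w ᵥ* x) k ^ 2
  set W := ∑ i, w i ^ 2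
  set Z := ∑ i, y i ^ 2
  have hU : 0 ≤ U := Finset.sum_nonneg fun _ _ => sq_nonneg _
  have hZ : 0 ≤ Z := Finset.sum_nonneg fun _ _ => sq_nonneg _
  rcases hU.eq_or_lt with hU0 | hU0
  · rw [← hU0, mul_zero]; exact hZ
  · refine le_of_mul_le_mul_left ?_ hU0
    nlinarith [mul_le_mul_of_nonneg_right h2 hZ, mul_le_mul_of_nonneg_left h3 hc.le]

theorem enorm2_sub_le_of_isMinInterp {n p : ℕ} {x : Matrix (Fin n) (Fin p) ℝ} {c : ℝ} (hc : 0 < c)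
    (hx : ∀ v : Fin n → ℝ, c * ∑ i, v i ^ 2 ≤ ∑ k, (v ᵥ* x) k ^ 2) {y : Fin n → ℝ}
    {β b : Fin p → ℝ} (hb : IsMinInterp x (fun i => (∑ j, x i j * β j) + y i) b) :
    enorm2 (b - β) ≤ 2 * enorm2 β + enorm2 y / √c := by
  obtain ⟨u, hu, hun⟩ := exists_mulVec_eq_of_coercive x hc hx y
  have h1 : enorm2 b ≤ enorm2 (β + u) := hb.2 _ fun i => by
    rw [← hu]
    simp [mulVec, dotProduct, mul_add, Finset.sum_add_distrib]
  have h2 : enorm2 u ≤ enorm2 y / √c := by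
    rw [le_div_iff₀ (Real.sqrt_pos.2 hc)]
    refine le_of_sq_le_sq ?_ (enorm2_nonneg y)
    rw [mul_pow, Real.sq_sqrt hc.le, enorm2_sq, enorm2_sq]
    linarith
  linarith [enorm2_add_le β u, enorm2_sub_le b β]

theorem predNorm_sq {p : ℕ} {lam : ℕ → ℝ} (hlam : ∀ j : Fin p, 0 ≤ lam (j + 1))
    {Porth Sig : Matrix (Fin p) (Fin p) ℝ}
    (hSig : Sig = Porth * Matrix.diagonal (fun i : Fin p => lam ((i : ℕ) + 1)) * Porthᵀ)
    (d : Fin p → ℝ) :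
    predNorm Sig d ^ 2 = ∑ j : Fin p, lam (j + 1) * (Porthᵀ *ᵥ d) j ^ 2 := by
  have h : d ⬝ᵥ Sig *ᵥ d = ∑ j : Fin p, lam (j + 1) * (Porthᵀ *ᵥ d) j ^ 2 := by
    rw [hSig, ← mulVec_mulVec, ← mulVec_mulVec, dotProduct_mulVec, ← mulVec_transpose]
    simp only [dotProduct, mulVec_diagonal]
    exact Finset.sum_congr rfl fun j _ => by ring
  rw [predNorm, h, Real.sq_sqrt]
  exact Finset.sum_nonneg fun j _ => mul_nonneg (hlam j) (sq_nonneg _)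

/-- A design whose weighted form is at most `C` forces a noise bound on every solution of
`x d = y` in the corresponding ellipsoid. -/
theorem sum_sq_le_of_weightedQuad_le {n p : ℕ} {Porth : Matrix (Fin p) (Fin p) ℝ}
    (hP : Porth * Porthᵀ = 1) {a : Fin p → ℝ} (ha : ∀ j, 0 < a j) {x : Matrix (Fin n) (Fin p) ℝ}
    {d : Fin p → ℝ} {C D : ℝ} (hC : 0 ≤ C)
    (hq : weightedQuad Porth a (x *ᵥ d) x ≤ C * ∑ i, (x *ᵥ d) i ^ 2)
    (hd : ∑ j, (a j)⁻¹ * (Porthᵀ *ᵥ d) j ^ 2 ≤ D) : ∑ i, (x *ᵥ d) i ^ 2 ≤ C * D := by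
  set y := x *ᵥ d with hy
  set e := Porthᵀ *ᵥ d with he
  set h := rowComb Porth y x with hh
  have h1 : ∑ i, y i ^ 2 = ∑ j, h j * e j := by
    have : y ⬝ᵥ y = h ⬝ᵥ e := by
      rw [hh, rowComb_eq_mulVec, he, dotProduct_mulVec (Porthᵀ *ᵥ (y ᵥ* x)), vecMul_transpose,
        mulVec_mulVec, hP, one_mulVec, ← dotProduct_mulVec, ← hy]
    simpa [dotProduct, sq] using this
  have h2 : (∑ j, h j * e j) ^ 2 ≤ (∑ j, a j * h j ^ 2) * ∑ j, (a j)⁻¹ * e j ^ 2 := by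
    refine Finset.sum_sq_le_sum_mul_sum_of_sq_le_mul _ (fun j _ => ?_) (fun j _ => ?_)
      fun j _ => ?_
    · have := ha j; positivity
    · have := ha j; positivity
    · have := (ha j).ne'
      refine le_of_eq ?_
      field_simp
  set Y := ∑ i, y i ^ 2
  have hY : 0 ≤ Y := Finset.sum_nonneg fun _ _ => sq_nonneg _
  have hD : 0 ≤ D := le_trans (Finset.sum_nonneg fun j _ => by have := ha j; positivity) hd
  rw [← h1] at h2
  have h3 : Y ^ 2 ≤ C * Y * D := h2.trans (mul_le_mul hq hd
    (Finset.sum_nonneg fun j _ => by have := ha j; positivity) (by positivity))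
  rcases hY.eq_or_lt with h0 | h0
  · rw [← h0]; positivity
  · refine le_of_mul_le_mul_left ?_ h0
    linarith

theorem exists_greatest_radius {p : ℕ} (w : Fin p → ℝ) {b T : ℝ} (hb : 0 < b) (hT : 0 < T) :
    ∃ t, 0 < t ∧ ∑ j, min (w j) (t ^ 2) ≤ b ∧ t ≤ T ∧
      ∀ t', 0 ≤ t' → ∑ j, min (w j) (t' ^ 2) ≤ b → t' ≤ T → t' ≤ t := by
  let f : ℝ → ℝ := fun t => ∑ j, min (w j) (t ^ 2)
  have hf : Continuous f := by fun_prop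
  set t₀ := min T √(b / (p + 1)) with ht₀
  have ht₀pos : 0 < t₀ := lt_min hT (Real.sqrt_pos.2 (by positivity))
  have hft₀ : f t₀ ≤ b := by
    calc f t₀ ≤ ∑ _j : Fin p, b / (p + 1) := by
          refine Finset.sum_le_sum fun j _ => (min_le_right _ _).trans ?_
          calc t₀ ^ 2 ≤ √(b / (p + 1)) ^ 2 := by gcongr; exact min_le_right _ _
            _ = b / (p + 1) := Real.sq_sqrt (by positivity)
      _ = p * (b / (p + 1)) := by simp
      _ ≤ b := by
        rw [mul_div_assoc', div_le_iff₀ (by positivity)]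
        nlinarith
  have hcomp : IsCompact (Set.Icc 0 T ∩ f ⁻¹' Set.Iic b) :=
    isCompact_Icc.inter_right (isClosed_Iic.preimage hf)
  have hmem : t₀ ∈ Set.Icc 0 T ∩ f ⁻¹' Set.Iic b := ⟨⟨ht₀pos.le, min_le_left _ _⟩, hft₀⟩
  obtain ⟨t, ⟨⟨_, htT⟩, htb⟩, hmax⟩ := hcomp.exists_isGreatest ⟨t₀, hmem⟩
  exact ⟨t, ht₀pos.trans_le (hmax hmem), htb, htT, fun t' h0 h1 h2 => hmax ⟨⟨h0, h2⟩, h1⟩⟩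

theorem sum_tail_eq_rsum {p : ℕ} (lam : ℕ → ℝ) {k : ℕ} (hk : 1 ≤ k) :
    ∑ j : Fin p, (if k ≤ (j : ℕ) + 1 then (1 : ℝ) else 0) * lam (j + 1) = rsum p lam k := by
  rw [rsum, Fin.sum_univ_eq_sum_range
    (fun j => (if k ≤ j + 1 then (1 : ℝ) else 0) * lam (j + 1)) p]
  simp only [ite_mul, one_mul, zero_mul, ← Finset.sum_filter]
  refine Finset.sum_bij' (fun j _ => j + 1) (fun i _ => i - 1) ?_ ?_ ?_ ?_ ?_
  · intro j hj
    simp only [Finset.mem_filter, Finset.mem_range, Finset.mem_Icc] at hj ⊢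
    omega
  · intro i hi
    simp only [Finset.mem_filter, Finset.mem_range, Finset.mem_Icc] at hi ⊢
    omega
  · intro j _
    simp
  · intro i hi
    simp only [Finset.mem_Icc] at hi
    exact Nat.sub_add_cancel (hk.trans hi.1)
  · intro j _
    rfl

/-- Off two exceptional events for the eigenvalue tail, `x` has singular values of order at least
`√(r_k)`. -/
theorem coercive_of_notMem_net {n p : ℕ} {Porth : Matrix (Fin p) (Fin p) ℝ}
    (hP : Porth * Porthᵀ = 1) {s : Finset (EuclideanSpace ℝ (Fin n))}
    (hnet : ∀ v : EuclideanSpace ℝ (Fin n), ‖v‖ = 1 → ∃ u ∈ s, ‖v - u‖ ≤ 1 / 16) (k : ℕ)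
    {x : Matrix (Fin n) (Fin p) ℝ} {B R : ℝ} (hR : 0 ≤ R) (hBR : B ≤ 9 / 4 * R)
    (hxu : x ∉ netUpper Porth (fun j => if k ≤ (j : ℕ) + 1 then 1 else 0) s B)
    (hxl : x ∉ netLower Porth (fun j => if k ≤ (j : ℕ) + 1 then 1 else 0) s (R / 4))
    (v : Fin n → ℝ) : 4 / 25 * R * ∑ i, v i ^ 2 ≤ ∑ l, (v ᵥ* x) l ^ 2 := by
  refine (le_weightedQuad Porth (fun j => by split_ifs <;> norm_num) hnet hR hBR hxu hxl v).trans ?_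
  rw [← sum_sq_transpose_mulVec hP, ← rowComb_eq_mulVec]
  unfold weightedQuad
  refine Finset.sum_le_sum fun j _ => ?_
  beta_reduce
  split_ifs
  · rw [one_mul]
  · rw [zero_mul]; exact sq_nonneg _

theorem rho_pos {p : ℕ} {lam : ℕ → ℝ} {c0 : ℝ} {n : ℕ}
    (hR : 0 < rsum p lam (kstar p lam c0 n)) (β : Fin p → ℝ) {z : ℝ} (hz : 0 < z) :
    0 < rho p lam c0 n β z :=
  add_pos_of_nonneg_of_pos (enorm2_nonneg β)
    (div_pos (by positivity) (Real.sqrt_pos.2 hR))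

theorem rho_mono {p : ℕ} (lam : ℕ → ℝ) (c0 : ℝ) (n : ℕ) (β : Fin p → ℝ) {z z' : ℝ}
    (hz : z ≤ z') : rho p lam c0 n β z ≤ rho p lam c0 n β z' := by
  unfold rho
  gcongr

theorem rho_le_two_mul {p : ℕ} (lam : ℕ → ℝ) (c0 : ℝ) (n : ℕ) (β : Fin p → ℝ) {z z' : ℝ}
    (hz : z' ≤ 2 * z) : rho p lam c0 n β z' ≤ 2 * rho p lam c0 n β z := by
  have h1 : 4 * z' / √(rsum p lam (kstar p lam c0 n)) ≤
      2 * (4 * z / √(rsum p lam (kstar p lam c0 n))) := by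
    rw [← mul_div_assoc]
    exact div_le_div_of_nonneg_right (by linarith) (Real.sqrt_nonneg _)
  unfold rho
  linarith [enorm2_nonneg β]

theorem sum_min_le_of_lt_rbar {p : ℕ} {lam : ℕ → ℝ} {γ ρ z t : ℝ} (ht : 0 ≤ t)
    (h : t < rbar p lam γ ρ z) :
    ∑ i : Fin p, min (lam ((i : ℕ) + 1) * ρ ^ 2) (t ^ 2) ≤ γ * z ^ 2 := by
  rw [rbar] at h
  have hne : {r : ℝ | 0 < r ∧
      ∑ i : Fin p, min (lam ((i : ℕ) + 1) * ρ ^ 2) (r ^ 2) ≤ γ * z ^ 2}.Nonempty := by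
    by_contra hne
    rw [Set.not_nonempty_iff_eq_empty.1 hne, Real.sSup_empty] at h
    linarith
  obtain ⟨r, ⟨_, hr⟩, htr⟩ := exists_lt_of_lt_csSup hne h
  refine le_trans (Finset.sum_le_sum fun i _ => ?_) hr
  gcongr

/-- The deterministic part of the lower bound, for noise of norm in `[α, 2 α]`. -/
theorem min_rbar_le_predNorm {n p : ℕ} (hn : 0 < n) {lam : ℕ → ℝ}
    (hlam : ∀ j : Fin p, 0 ≤ lam (j + 1)) {Porth Sig : Matrix (Fin p) (Fin p) ℝ}
    (hP : Porth * Porthᵀ = 1)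
    (hSig : Sig = Porth * Matrix.diagonal (fun i : Fin p => lam ((i : ℕ) + 1)) * Porthᵀ)
    {s : Finset (EuclideanSpace ℝ (Fin n))}
    (hnet : ∀ v : EuclideanSpace ℝ (Fin n), ‖v‖ = 1 → ∃ u ∈ s, ‖v - u‖ ≤ 1 / 16)
    {c0 α ρ t : ℝ} (hα : 0 < α) (hρ : 0 < ρ) (ht : 0 < t) {a : Fin p → ℝ}
    (hadef : ∀ j : Fin p, (a j)⁻¹ = (ρ ^ 2)⁻¹ + lam (j + 1) * (t ^ 2)⁻¹) (ha : ∀ j, 0 < a j)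
    (hsum : ∑ j : Fin p, a j * lam (j + 1) ≤ 4 * (1 / 400) * α ^ 2) (htn : t ≤ α / (40 * √n))
    (hmax : ∀ t', 0 ≤ t' → ∑ j : Fin p, min (lam (j + 1) * ρ ^ 2) (t' ^ 2) ≤
      4 * (1 / 400) * α ^ 2 → t' ≤ α / (40 * √n) → t' ≤ t)
    {x : Matrix (Fin n) (Fin p) ℝ}
    (hx : x ∉ netUpper Porth a s (2 * ∑ j, a j * lam (j + 1) + 20 * n * t ^ 2))
    (hR : 0 < rsum p lam (kstar p lam c0 n))
    (hcoer : ∀ v : Fin n → ℝ,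
      4 / 25 * rsum p lam (kstar p lam c0 n) * ∑ i, v i ^ 2 ≤ ∑ l, (v ᵥ* x) l ^ 2)
    {y : Fin n → ℝ} {β b : Fin p → ℝ}
    (hρdef : ρ = rho p lam c0 n β α)
    (hb : IsMinInterp x (fun i => (∑ j, x i j * β j) + y i) b)
    (hy1 : α ≤ enorm2 y) (hy2 : enorm2 y ≤ 2 * α) :
    min (rbar p lam (1 / 400) (rho p lam c0 n β (enorm2 y)) (enorm2 y))
      (1 / 80 * enorm2 y / √n) ≤ predNorm Sig (fun j => b j - β j) := by
  set d : Fin p → ℝ := b - β with hd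
  change _ ≤ predNorm Sig d
  by_contra! hlt
  obtain ⟨hlt1, hlt2⟩ := lt_min_iff.1 hlt
  have hsn : 0 < √(n : ℝ) := Real.sqrt_pos.2 (by exact_mod_cast hn)
  have hpn : 0 ≤ predNorm Sig d := Real.sqrt_nonneg _
  have hy0 := enorm2_nonneg y
  have hpt : predNorm Sig d ≤ t := by
    refine hmax _ hpn ?_ ?_
    · calc _ ≤ ∑ i : Fin p, min (lam ((i : ℕ) + 1) * rho p lam c0 n β (enorm2 y) ^ 2)
            (predNorm Sig d ^ 2) := by
            refine Finset.sum_le_sum fun j _ => min_le_min_right _ ?_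
            have := hlam j
            have := rho_mono lam c0 n β hy1
            rw [hρdef] at hρ ⊢
            gcongr
        _ ≤ 1 / 400 * enorm2 y ^ 2 := sum_min_le_of_lt_rbar hpn hlt1
        _ ≤ 1 / 400 * (2 * α) ^ 2 := by gcongr
        _ = 4 * (1 / 400) * α ^ 2 := by ring
    · refine hlt2.le.trans ?_
      rw [div_le_div_iff₀ hsn (by positivity)]
      nlinarith
  have hxd : x *ᵥ d = y := by
    ext i
    have := hb.1 i
    simp only [hd, mulVec, dotProduct, Pi.sub_apply, mul_sub, Finset.sum_sub_distrib]
    linarith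
  have hdn : enorm2 d ≤ 4 * ρ := by
    have h1 := enorm2_sub_le_of_isMinInterp (by positivity) hcoer hb
    have h2 : enorm2 y / √(4 / 25 * rsum p lam (kstar p lam c0 n)) ≤
        2 * (4 * enorm2 y / √(rsum p lam (kstar p lam c0 n))) := by
      have h25 : √(4 / 25 : ℝ) = 2 / 5 := by
        rw [show (4 / 25 : ℝ) = (2 / 5) ^ 2 by norm_num, Real.sqrt_sq (by norm_num)]
      rw [Real.sqrt_mul (by norm_num), h25, ← mul_div_assoc,
        div_le_div_iff₀ (by positivity) (by positivity)]
      have := mul_nonneg hy0 (Real.sqrt_nonneg (rsum p lam (kstar p lam c0 n)))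
      linarith
    have h3 : enorm2 d ≤ 2 * rho p lam c0 n β (enorm2 y) := by
      rw [rho]
      linarith
    have h4 := rho_le_two_mul lam c0 n β hy2
    rw [← hρdef] at h4
    linarith
  have hell : ∑ j, (a j)⁻¹ * (Porthᵀ *ᵥ d) j ^ 2 ≤ 17 := by
    have h1 : ∑ j, (a j)⁻¹ * (Porthᵀ *ᵥ d) j ^ 2 =
        (ρ ^ 2)⁻¹ * enorm2 d ^ 2 + (t ^ 2)⁻¹ * predNorm Sig d ^ 2 := by
      rw [enorm2_sq, ← sum_sq_transpose_mulVec hP, predNorm_sq hlam hSig, Finset.mul_sum,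
        Finset.mul_sum, ← Finset.sum_add_distrib]
      refine Finset.sum_congr rfl fun j _ => ?_
      rw [hadef]
      ring
    have h2 : (ρ ^ 2)⁻¹ * enorm2 d ^ 2 ≤ 16 := by
      rw [inv_mul_le_iff₀ (by positivity)]
      calc enorm2 d ^ 2 ≤ (4 * ρ) ^ 2 := by have := enorm2_nonneg d; gcongr
        _ = _ := by ring
    have h3 : (t ^ 2)⁻¹ * predNorm Sig d ^ 2 ≤ 1 := by
      rw [inv_mul_le_iff₀ (by positivity), mul_one]
      gcongr
    linarith
  have hB : 2 * ∑ j : Fin p, a j * lam (j + 1) + 20 * n * t ^ 2 ≤ 13 / 400 * α ^ 2 := by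
    have h1 : 20 * n * t ^ 2 ≤ 5 / 400 * α ^ 2 := by
      calc 20 * n * t ^ 2 ≤ 20 * n * (α / (40 * √n)) ^ 2 := by gcongr
        _ = 5 / 400 * α ^ 2 := by
          rw [div_pow, mul_pow, Real.sq_sqrt (by positivity)]
          field_simp
          norm_num
    linarith
  have hB0 : 0 ≤ 2 * ∑ j : Fin p, a j * lam (j + 1) + 20 * n * t ^ 2 := by
    have := Finset.sum_nonneg fun (j : Fin p) (_ : j ∈ Finset.univ) =>
      mul_nonneg (ha j).le (hlam j)
    positivity
  have hfin := sum_sq_le_of_weightedQuad_le hP ha (x := x) (d := d) (by positivity)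
    (weightedQuad_le Porth (fun j => (ha j).le) hnet hB0 hx (x *ᵥ d)) hell
  rw [hxd, ← enorm2_sq] at hfin
  have h1 : α ^ 2 ≤ enorm2 y ^ 2 := by gcongr
  have h2 : 0 < α ^ 2 := by positivity
  linarith

/-- Theorem 1, lower bound: there exist absolute constants
`γ, c₁, c₂, c₃ > 0` such that, in the model `Y = Xβ* + ξ` with `p ≥ n`, `k* ≤ c n`, and
rows of `X` which conditionally on `ξ` are i.i.d. `N(0,Σ)` (formalized as: `X` is
independent of `ξ` and `X` has law `N(0,Σ)^{⊗n}`), with probability at least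
`1 - c₁ e^{-c₂ n}` the minimum `ℓ2`-norm interpolator `β̂` satisfies
`‖Σ^{1/2}(β̂ - β*)‖₂ ≥ min (r̄(γ)) (c₃ ‖ξ‖₂/√n)`. -/
theorem stmt1 :
    ∃ c0 > (0 : ℝ), ∃ c > (0 : ℝ), ∃ γ > (0 : ℝ),
    ∃ c1 > (0 : ℝ), ∃ c2 > (0 : ℝ), ∃ c3 > (0 : ℝ),
    ∀ (n p : ℕ), 0 < n → n ≤ p →
    ∀ (lam : ℕ → ℝ) (Porth Sig : Matrix (Fin p) (Fin p) ℝ),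
      (∀ k, 1 ≤ k → k ≤ p → 0 ≤ lam k) →
      (∀ j k, 1 ≤ j → j ≤ k → k ≤ p → lam k ≤ lam j) →
      Porth * Porthᵀ = 1 →
      Sig = Porth * Matrix.diagonal (fun i : Fin p => lam ((i : ℕ) + 1)) * Porthᵀ →
      n ≤ Sig.rank →
    ∀ (Ω : Type) (_ : MeasurableSpace Ω) (P : Measure Ω), IsProbabilityMeasure P →
    ∀ (X : Ω → Fin n → Fin p → ℝ) (ξ : Ω → Fin n → ℝ) (βstar : Fin p → ℝ)
      (βhat : Ω → Fin p → ℝ),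
      -- conditionally on `ξ`, the rows of `X` are i.i.d. `N(0,Σ)`:
      -- `X ⟂ ξ` and `X ~ N(0,Σ)^{⊗n}`
      IndepFun X ξ P →
      Measure.map X P = (Measure.pi fun _ : Fin n => mvGaussian p lam Porth) →
      (∀ᵐ ω ∂P, IsMinInterp (X ω)
        (fun i => (∑ j, X ω i j * βstar j) + ξ ω i) (βhat ω)) →
      (kstarSet p lam c0 n).Nonempty → (kstar p lam c0 n : ℝ) ≤ c * n →
      ENNReal.ofReal (1 - c1 * Real.exp (-c2 * n)) ≤
        P {ω | min (rbar p lam γ (rho p lam c0 n βstar (enorm2 (ξ ω))) (enorm2 (ξ ω)))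
                   (c3 * enorm2 (ξ ω) / Real.sqrt n) ≤
               predNorm Sig (fun j => βhat ω j - βstar j)} := by
  refine ⟨100, by norm_num, 1, by norm_num, 1 / 400, by norm_num, 3, by norm_num, 1, by norm_num,
    1 / 80, by norm_num, ?_⟩
  intro n p hn _ lam Porth Sig hlam0 hanti hP hSig _ Ω _ P _ X ξ βstar βhat hind hlaw hmin hne _
  have hn' : (0 : ℝ) < n := by exact_mod_cast hn
  have hlam : ∀ j : Fin p, 0 ≤ lam (j + 1) := fun j => hlam0 _ (by omega) (by omega)
  obtain ⟨s, hs, hcard, hnet⟩ := exists_sphere_net (EuclideanSpace ℝ (Fin n))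
    (by norm_num : (0 : ℝ) < 1 / 16)
  have hcard : (s.card : ℝ) ≤ 33 ^ n := by
    rw [finrank_euclideanSpace_fin] at hcard
    norm_num at hcard
    exact hcard
  obtain ⟨hk1, hkp, hkR⟩ : kstar p lam 100 n ∈ kstarSet p lam 100 n := Nat.sInf_mem hne
  set k := kstar p lam 100 n with hk
  set R := rsum p lam k with hRdef
  set m := lam k with hm
  have hm0 : 0 < m := by
    refine (hlam0 k hk1 hkp).lt_of_ne' fun h0 => ?_
    rw [← hm] at h0
    rw [h0, div_zero] at hkR
    linarith
  have hRm : 100 * n * m ≤ R := (le_div_iff₀ hm0).1 hkR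
  have hR : 0 < R := lt_of_lt_of_le (by positivity) hRm
  -- the exceptional event for the smallest singular value
  set τ : Fin p → ℝ := fun j => if k ≤ (j : ℕ) + 1 then 1 else 0 with hτ
  have hτ0 : ∀ j, 0 ≤ τ j := fun j => by simp only [hτ]; split_ifs <;> norm_num
  have hτm : ∀ j : Fin p, τ j * lam (j + 1) ≤ m := fun j => by
    simp only [hτ]
    split_ifs with h
    · rw [one_mul]; exact hanti _ _ hk1 h (by omega)
    · rw [zero_mul]; exact hm0.le
  have hτsum : ∑ j : Fin p, τ j * lam (j + 1) = R := sum_tail_eq_rsum lam hk1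
  have hup := measure_netUpper_le lam hlam hP hτ0 hm0 hτm s hs hcard
  have hlow := measure_netLower_le lam hlam hP hτ0 hm0 hτm
    (by rw [hτsum]; linarith) s hs hcard
  rw [hτsum] at hup hlow
  -- the exceptional event attached to each dyadic scale of the noise
  have hρ : ∀ l : ℤ, 0 < rho p lam 100 n βstar ((2 : ℝ) ^ l) := fun l =>
    rho_pos hR βstar (by positivity)
  choose t ht0 htsum htle htmax using fun l : ℤ =>
    exists_greatest_radius (fun j : Fin p => lam (j + 1) * rho p lam 100 n βstar ((2 : ℝ) ^ l) ^ 2)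
      (b := 4 * (1 / 400) * ((2 : ℝ) ^ l) ^ 2) (T := (2 : ℝ) ^ l / (40 * √n))
      (by positivity) (by positivity)
  set a : ℤ → Fin p → ℝ := fun l j =>
    ((rho p lam 100 n βstar ((2 : ℝ) ^ l) ^ 2)⁻¹ + lam (j + 1) * (t l ^ 2)⁻¹)⁻¹ with ha
  have ha0 : ∀ l j, 0 < a l j := fun l j => by
    have := hlam j
    have := hρ l
    have := ht0 l
    positivity
  have hamin : ∀ (l : ℤ) (j : Fin p), a l j * lam (j + 1) ≤
      min (lam (j + 1) * rho p lam 100 n βstar ((2 : ℝ) ^ l) ^ 2) (t l ^ 2) := fun l j => by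
    have h1 := hlam j
    have h2 := hρ l
    have h3 := ht0 l
    have h4 := ha0 l j
    have h5 : (a l j)⁻¹ = (rho p lam 100 n βstar ((2 : ℝ) ^ l) ^ 2)⁻¹ +
      lam (j + 1) * (t l ^ 2)⁻¹ := inv_inv _
    refine le_min ?_ ?_
    · rw [mul_comm]
      refine mul_le_mul_of_nonneg_left ?_ h1
      rw [← inv_le_inv₀ (by positivity) h4, h5]
      exact le_add_of_nonneg_right (by positivity)
    · have h6 : lam (j + 1) * (t l ^ 2)⁻¹ ≤ (a l j)⁻¹ := by
        rw [h5]
        exact le_add_of_nonneg_left (by positivity)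
      rw [← div_eq_mul_inv, div_le_iff₀ (by positivity), inv_mul_eq_div, le_div_iff₀ h4] at h6
      linarith
  have hbad := fun l : ℤ => measure_netUpper_le lam hlam hP (fun j => (ha0 l j).le)
    (pow_pos (ht0 l) 2) (fun j => (hamin l j).trans (min_le_right _ _)) s hs hcard
  set A : ℤ → Set (Fin n → Fin p → ℝ) := fun l =>
    netUpper Porth τ s (2 * R + 20 * n * m) ∪ netLower Porth τ s (R / 4) ∪
      netUpper Porth (a l) s (2 * ∑ j, a l j * lam (j + 1) + 20 * n * t l ^ 2) with hA
  have hAm : ∀ l, MeasurableSet (A l) := fun l =>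
    ((measurableSet_netUpper _ _ _ _).union (measurableSet_netLower _ _ _ _)).union
      (measurableSet_netUpper _ _ _ _)
  have hAν : ∀ l, (Measure.pi fun _ : Fin n => mvGaussian p lam Porth) (A l) ≤
      ENNReal.ofReal (3 * Real.exp (-n)) := fun l => by
    have h3 : 3 * Real.exp (-n) = Real.exp (-n) + Real.exp (-n) + Real.exp (-n) := by ring
    rw [h3, ENNReal.ofReal_add (by positivity) (by positivity),
      ENNReal.ofReal_add (by positivity) (by positivity)]
    exact (measure_union_le _ _).trans
      (add_le_add ((measure_union_le _ _).trans (add_le_add hup hlow)) (hbad l))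
  have hXae : AEMeasurable X P := AEMeasurable.of_map_ne_zero (by
    rw [hlaw]
    exact IsProbabilityMeasure.ne_zero _)
  have hind' := hind.congr hXae.ae_eq_mk (Filter.EventuallyEq.refl _ ξ)
  let e : ℤ ≃ ℕ := Denumerable.eqv ℤ
  let κ : (Fin n → ℝ) → ℕ := fun y => e ⌊Real.logb 2 (enorm2 y)⌋
  have hκ : Measurable κ := by
    have h1 : Measurable fun y : Fin n → ℝ => Real.logb 2 (enorm2 y) :=
      (Real.measurable_log.comp measurable_enorm2).div_const _
    exact (measurable_from_top (f := e)).comp h1.floor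
  have hkey := one_le_measure_add_of_indep_discrete P hXae.measurable_mk (κ ∘ ξ)
    (fun B hB C => hind'.measure_inter_preimage_eq_mul B (κ ⁻¹' C) hB
      (hκ (MeasurableSet.of_discrete (s := C))))
    (fun i => A (e.symm i)) (fun i => hAm _) (ε := ENNReal.ofReal (3 * Real.exp (-n)))
    (fun i => by
      rw [← Measure.map_apply hXae.measurable_mk (hAm _), ← Measure.map_congr hXae.ae_eq_mk, hlaw]
      exact hAν _)
    {ω | min (rbar p lam (1 / 400) (rho p lam 100 n βstar (enorm2 (ξ ω))) (enorm2 (ξ ω)))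
                   (1 / 80 * enorm2 (ξ ω) / Real.sqrt n) ≤
               predNorm Sig (fun j => βhat ω j - βstar j)} (by
      filter_upwards [hmin, hXae.ae_eq_mk] with ω hω hXω hgood
      rw [← hXω] at hgood
      have hpn : 0 ≤ predNorm Sig (fun j => βhat ω j - βstar j) := Real.sqrt_nonneg _
      rcases (enorm2_nonneg (ξ ω)).eq_or_lt with h0 | h0
      · refine (min_le_right _ _).trans ?_
        rw [← h0]
        simpa using hpn
      · set l : ℤ := ⌊Real.logb 2 (enorm2 (ξ ω))⌋ with hl
        have hel : e.symm ((κ ∘ ξ) ω) = l := e.symm_apply_apply _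
        rw [hel] at hgood
        simp only [hA, Set.mem_union, not_or] at hgood
        obtain ⟨⟨hgu, hgl⟩, hgx⟩ := hgood
        have hz1 : (2 : ℝ) ^ l ≤ enorm2 (ξ ω) := by
          rw [← Real.rpow_intCast, ← Real.le_logb_iff_rpow_le one_lt_two h0]
          exact Int.floor_le _
        have hz2 : enorm2 (ξ ω) ≤ 2 * (2 : ℝ) ^ l := by
          rw [mul_comm, ← zpow_add_one₀ two_ne_zero, ← Real.rpow_intCast,
            ← Real.logb_le_iff_le_rpow one_lt_two h0]
          push_cast
          exact (Int.lt_floor_add_one _).le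
        exact min_rbar_le_predNorm hn hlam hP hSig hnet (by positivity) (hρ l) (ht0 l)
          (fun j => inv_inv _) (ha0 l)
          ((Finset.sum_le_sum fun j _ => hamin l j).trans (htsum l)) (htle l) (htmax l) hgx hR
          (coercive_of_notMem_net hP hnet k hR.le (by linarith) hgu hgl) rfl hω hz1 hz2)
  rw [ENNReal.ofReal_sub _ (by positivity), ENNReal.ofReal_one, neg_one_mul]
  exact tsub_le_iff_right.2 hkey
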